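/- arXiv:2409.03423 — 2 statements merged into one kernel-verified Lean document; each statement's English description precedes it below -/
import Mathlib

section
/- With the notation above, the function (j,θ) ↦ rank(Z_g(j,θ)) is (M/q)-periodic in j and 1-periodic in θ; moreover for all j ∈ ℤ and a.e. θ, rank(Z_g(j,θ)) ≤ card(𝒦_j), where 𝒦_j = {k ∈ {0,...,p−1} : j + kM ∈ 𝕊}. -/
open MeasureTheory

/-- The discrete Zak transform with period `P`. -/
noncomputable def discreteZak (P : ℕ) (f : ℤ → ℂ) (m : ℤ) (θ : ℝ) : ℂ :=
  ∑' k : ℤ, f (m + k * P) * Complex.exp (2 * Real.pi * Complex.I * k * θ)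

/-- The `qL × p` block matrix `Z_g(j,θ)`, rows indexed by pairs `(l, r)`. -/
noncomputable def Zg (M N p q L : ℕ) (g : Fin L → ℤ → ℂ) (j : ℤ) (θ : ℝ) :
    Matrix (Fin L × Fin q) (Fin p) ℂ :=
  Matrix.of fun lr k =>
    discreteZak (p * M) (g lr.1) (j + (k : ℕ) * (M : ℤ) - (lr.2 : ℕ) * (N : ℤ)) θ

theorem zak_shift (P : ℕ) (f : ℤ → ℂ) (m n : ℤ) (θ : ℝ) :
    discreteZak P f (m + n * P) θ =
      Complex.exp (-(2 * Real.pi * Complex.I * n * θ)) * discreteZak P f m θ := by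
  unfold discreteZak
  rw [← tsum_mul_left, ← (Equiv.addRight n).tsum_eq (fun k : ℤ => Complex.exp _ * _)]
  refine tsum_congr fun k => ?_
  simp only [Equiv.coe_addRight]
  rw [mul_left_comm, ← Complex.exp_add]
  have e1 : m + n * (P : ℤ) + k * P = m + (k + n) * P := by ring
  rw [e1]
  congr 2
  push_cast
  ring

theorem rank_le_aux {m n : Type*} [Fintype m] [Fintype n] [DecidableEq m] [DecidableEq n]
    (A B : Matrix m n ℂ) (σ : m → m) (τ : n → n) (u : m → ℂ) (v : n → ℂ)
    (h : ∀ i k, A i k = u i * v k * B (σ i) (τ k)) : A.rank ≤ B.rank := by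
  have : A = (Matrix.of fun i i' => if σ i = i' then u i else 0) * B *
      (Matrix.of fun k' k => if τ k = k' then v k else 0) := by
    ext i k
    simp [Matrix.mul_apply, h]
    ring
  rw [this]
  exact (Matrix.rank_mul_le_left _ _).trans (Matrix.rank_mul_le_right _ _)

theorem rank_shift_le (M N p q L : ℕ) (hp : 0 < p) (hq : 0 < q) (hMN : q * N = p * M)
    (g : Fin L → ℤ → ℂ) (j a b : ℤ) (θ : ℝ) :
    (Zg M N p q L g (j + a * N + b * M) θ).rank ≤ (Zg M N p q L g j θ).rank := by
  have hp' : (0 : ℤ) < p := by exact_mod_cast hp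
  have hq' : (0 : ℤ) < q := by exact_mod_cast hq
  have hMN' : (q : ℤ) * N = p * M := by exact_mod_cast hMN
  have hk : ∀ k : Fin p, ((((k : ℕ) + b) % p).toNat : ℤ) = ((k : ℕ) + b) % p :=
    fun k => Int.toNat_of_nonneg (Int.emod_nonneg _ hp'.ne')
  have hr : ∀ r : Fin q, ((((r : ℕ) - a) % q).toNat : ℤ) = ((r : ℕ) - a) % q :=
    fun r => Int.toNat_of_nonneg (Int.emod_nonneg _ hq'.ne')
  refine rank_le_aux _ _
    (fun lr => (lr.1, ⟨(((lr.2 : ℕ) - a) % q).toNat, by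
      have := hr lr.2
      have := Int.emod_lt_of_pos ((lr.2 : ℕ) - a) hq'
      omega⟩))
    (fun k => ⟨(((k : ℕ) + b) % p).toNat, by
      have := hk k
      have := Int.emod_lt_of_pos ((k : ℕ) + b) hp'
      omega⟩)
    (fun lr => Complex.exp (2 * Real.pi * Complex.I * ((((lr.2 : ℕ) - a) / q : ℤ) : ℂ) * θ))
    (fun k => Complex.exp (-(2 * Real.pi * Complex.I * ((((k : ℕ) + b) / p : ℤ) : ℂ) * θ)))
    ?_
  rintro ⟨l, r⟩ k
  simp only [Zg, Matrix.of_apply]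
  rw [hk, hr, ← Complex.exp_add]
  have h1 := Int.emod_add_mul_ediv ((k : ℕ) + b) p
  have h2 := Int.emod_add_mul_ediv ((r : ℕ) - a) q
  set x := (((k : ℕ) : ℤ) + b) / p
  set y := (((r : ℕ) : ℤ) - a) / q
  have e : j + a * N + b * M + (k : ℕ) * (M : ℤ) - (r : ℕ) * (N : ℤ) =
      (j + (((k : ℕ) + b) % p) * (M : ℤ) - (((r : ℕ) - a) % q) * (N : ℤ))
        + (x - y) * ((p * M : ℕ) : ℤ) := by
    push_cast
    linear_combination (-(M : ℤ)) * h1 + (N : ℤ) * h2 - y * hMN'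
  rw [e, zak_shift]
  congr 2
  push_cast
  ring

theorem zak_one (P : ℕ) (f : ℤ → ℂ) (m : ℤ) (θ : ℝ) :
    discreteZak P f m (θ + 1) = discreteZak P f m θ := by
  unfold discreteZak
  refine tsum_congr fun k => ?_
  congr 1
  rw [Complex.exp_eq_exp_iff_exists_int]
  exact ⟨k, by push_cast; ring⟩

/-- `(j,θ) ↦ rank Z_g(j,θ)` is `(M/q)`-periodic in `j`, `1`-periodic in `θ`, and
for all `j`, a.e. `θ`, `rank Z_g(j,θ) ≤ card 𝒦_j` where
`𝒦_j = {k ∈ {0,...,p-1} : j + kM ∈ 𝕊}`. -/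
theorem stmt9 (M N p q L : ℕ) (hM : 0 < M) (hN : 0 < N) (hp : 0 < p) (hq : 0 < q)
    (hL : 0 < L) (hpq : Nat.Coprime p q) (hMN : q * N = p * M)
    (S : Set ℤ) (hper : ∀ j ∈ S, ∀ n : ℤ, j + n * N ∈ S)
    (g : Fin L → lp (fun _ : ℤ => ℂ) 2) (hg : ∀ l, ∀ j, j ∉ S → g l j = 0) :
    (∀ j : ℤ, ∀ᵐ θ : ℝ ∂volume,
      (Zg M N p q L (fun l i => g l i) (j + ((M / q : ℕ) : ℤ)) θ).rank =
        (Zg M N p q L (fun l i => g l i) j θ).rank) ∧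
    (∀ j : ℤ, ∀ᵐ θ : ℝ ∂volume,
      (Zg M N p q L (fun l i => g l i) j (θ + 1)).rank =
        (Zg M N p q L (fun l i => g l i) j θ).rank) ∧
    (∀ j : ℤ, ∀ᵐ θ : ℝ ∂volume,
      (Zg M N p q L (fun l i => g l i) j θ).rank ≤
        Nat.card {k : Fin p // j + (k : ℕ) * (M : ℤ) ∈ S}) := by
  refine ⟨fun j => ae_of_all _ fun θ => ?_, fun j => ae_of_all _ fun θ => ?_,
    fun j => ae_of_all _ fun θ => ?_⟩
  · have hdvd : q ∣ M := hpq.symm.dvd_of_dvd_mul_left ⟨N, hMN.symm⟩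
    obtain ⟨d, rfl⟩ := hdvd
    have hN' : N = p * d := by
      apply Nat.eq_of_mul_eq_mul_left hq
      rw [hMN]; ring
    rw [Nat.mul_div_cancel_left _ hq]
    have hb := Nat.gcd_eq_gcd_ab p q
    rw [hpq.gcd_eq_one] at hb
    set a := Nat.gcdA p q
    set b := Nat.gcdB p q
    have e : (d : ℤ) = a * (N : ℤ) + b * ((q * d : ℕ) : ℤ) := by
      rw [hN']; push_cast at hb ⊢
      linear_combination (d : ℤ) * hb
    apply le_antisymm
    · rw [e, ← add_assoc]
      exact rank_shift_le _ _ _ _ _ hp hq hMN _ j a b θ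
    · have := rank_shift_le (q * d) N p q L hp hq hMN (fun l i => g l i) (j + d) (-a) (-b) θ
      have e2 : j + (d : ℤ) + -a * N + -b * ((q * d : ℕ) : ℤ) = j := by
        linear_combination e
      rwa [e2] at this
  · congr 1
    ext lr k
    simp only [Zg, Matrix.of_apply, zak_one]
  · classical
    set A := Zg M N p q L (fun l i => g l i) j θ with hA
    have hz : ∀ i (k : Fin p), j + (k : ℕ) * (M : ℤ) ∉ S → A i k = 0 := by
      rintro ⟨l, r⟩ k hk
      simp only [hA, Zg, Matrix.of_apply, discreteZak]
      convert tsum_zero with n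
      rw [hg l _ ?_, zero_mul]
      intro hm
      apply hk
      have hMN' : (q : ℤ) * N = p * M := by exact_mod_cast hMN
      have := hper _ hm ((r : ℕ) - n * q)
      convert this using 1
      push_cast
      linear_combination n * hMN'
    have hf : A = A.submatrix id
        (Subtype.val : {k : Fin p // j + (k : ℕ) * (M : ℤ) ∈ S} → Fin p) *
        (Matrix.of fun (k' : {k : Fin p // j + (k : ℕ) * (M : ℤ) ∈ S}) k => if k'.1 = k then (1 : ℂ) else 0) := by
      ext i k
      simp only [Matrix.mul_apply, Matrix.submatrix_apply, Matrix.of_apply, id, mul_ite, mul_one,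
        mul_zero]
      by_cases hk : j + (k : ℕ) * (M : ℤ) ∈ S
      · rw [Finset.sum_eq_single ⟨k, hk⟩]
        · simp
        · intro b _ hb
          rw [if_neg]
          exact fun h => hb (Subtype.ext h)
        · simp
      · rw [hz i k hk, Finset.sum_eq_zero]
        rintro ⟨b, hb⟩ _
        rw [if_neg]
        rintro rfl
        exact hk hb
    rw [hf, Nat.card_eq_fintype_card]
    exact (Matrix.rank_mul_le_left _ _).trans (Matrix.rank_le_card_width _)
end

section
/- With the standing assumptions (𝕊 Nℤ-periodic, qN = pM, gcd(p,q)=1, L ∈ ℕ), the following are equivalent: (1) there exists g = {g_l}_{l<L} ⊂ ℓ²(𝕊) such that the multi-window Gabor system 𝒢(g,L,M,N) is a frame for ℓ²(𝕊); (2) there exists such g making it a Parseval frame; (3) card(𝒦_j) ≤ qL for all j ∈ {0,...,M/q−1}, where 𝒦_j = {k < p : j + kM ∈ 𝕊}. -/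
/-- The Gabor system element `e^{2πim·/M} g(· - nN)`. -/
noncomputable def gaborFn (M N : ℕ) (g : ℤ → ℂ) (m : ℕ) (n : ℤ) (j : ℤ) : ℂ :=
  Complex.exp (2 * Real.pi * Complex.I * m * j / M) * g (j - n * N)

/-- The formal `ℓ²` inner product `⟨f, φ⟩ = Σ_j f(j) conj(φ(j))`. -/
noncomputable def ip (f φ : ℤ → ℂ) : ℂ :=
  ∑' j : ℤ, f j * (starRingEnd ℂ) (φ j)

/-- The frame sum `Σ_{m<M, n∈ℤ, l<L} |⟨f, e^{2πim·/M} g_l(·-nN)⟩|²`. -/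
noncomputable def gaborSum (M N L : ℕ) (g : Fin L → ℤ → ℂ) (f : ℤ → ℂ) : ℝ :=
  ∑' x : Fin M × ℤ × Fin L, ‖ip f (gaborFn M N (g x.2.2) (x.1 : ℕ) x.2.1)‖ ^ 2

abbrev Ltwo (I : Type) : Type := lp (fun _ : I => ℂ) 2

lemma Ltwo_mem_iff {I : Type} {f : I → ℂ} :
    Memℓp (E := fun _ : I => ℂ) f 2 ↔ Summable fun i => ‖f i‖ ^ 2 := by
  rw [memℓp_gen_iff (by norm_num)]
  simp

lemma Ltwo_hasSum {I : Type} (f : Ltwo I) : HasSum (fun i => ‖f i‖ ^ 2) (‖f‖ ^ 2) := by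
  have := lp.hasSum_norm (p := 2) (by norm_num) f
  simpa using this

lemma Ltwo_inner {I : Type} (f g : Ltwo I) :
    HasSum (fun i => g i * (starRingEnd ℂ) (f i)) (inner ℂ f g) := by
  have := lp.hasSum_inner (𝕜 := ℂ) f g
  simpa using this

noncomputable def reidx {I : Type} (σ : Equiv.Perm I) : Ltwo I ≃ₗᵢ[ℂ] Ltwo I where
  toFun f := ⟨fun i => f (σ i), Ltwo_mem_iff.2 ((σ.summable_iff (f := fun i => ‖f i‖ ^ 2)).2 (Ltwo_hasSum f).summable)⟩
  invFun f := ⟨fun i => f (σ.symm i), Ltwo_mem_iff.2 ((σ.symm.summable_iff (f := fun i => ‖f i‖ ^ 2)).2 (Ltwo_hasSum f).summable)⟩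
  map_add' f g := by ext i; rfl
  map_smul' c f := by ext i; rfl
  left_inv f := by ext i; simp
  right_inv f := by ext i; simp
  norm_map' f := by
    have h1 := Ltwo_hasSum f
    rw [← σ.hasSum_iff] at h1
    have h2 := (Ltwo_hasSum (I := I) ⟨fun i => f (σ i), Ltwo_mem_iff.2 ((σ.summable_iff (f := fun i => ‖f i‖ ^ 2)).2 (Ltwo_hasSum f).summable)⟩).unique h1
    exact (sq_eq_sq₀ (norm_nonneg _) (norm_nonneg _)).1 h2

lemma reidx_apply {I : Type} (σ : Equiv.Perm I) (f : Ltwo I) (i : I) : reidx σ f i = f (σ i) := rfl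

def shPerm (κ : Type) (n : ℤ) : Equiv.Perm (ℤ × κ) where
  toFun x := (x.1 - n, x.2)
  invFun x := (x.1 + n, x.2)
  left_inv x := by simp
  right_inv x := by simp

noncomputable def shf {κ : Type} (n : ℤ) : Ltwo (ℤ × κ) ≃ₗᵢ[ℂ] Ltwo (ℤ × κ) := reidx (shPerm κ n)

lemma shf_apply {κ : Type} (n : ℤ) (f : Ltwo (ℤ × κ)) (x : ℤ × κ) :
    shf n f x = f (x.1 - n, x.2) := rfl

lemma shf_add {κ : Type} (a b : ℤ) (f : Ltwo (ℤ × κ)) : shf a (shf b f) = shf (a + b) f := by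
  ext x
  simp [shf_apply, sub_sub]

theorem frame_dim {κ R : Type} [Fintype κ] [Fintype R] (ψ : R → Ltwo (ℤ × κ)) (A B : ℝ) (hA : 0 < A)
    (hs : ∀ h : Ltwo (ℤ × κ), Summable fun x : ℤ × R => ‖(inner ℂ (shf x.1 (ψ x.2)) h : ℂ)‖ ^ 2)
    (hlo : ∀ h : Ltwo (ℤ × κ), A * ‖h‖ ^ 2 ≤ ∑' x : ℤ × R, ‖(inner ℂ (shf x.1 (ψ x.2)) h : ℂ)‖ ^ 2)
    (hup : ∀ h : Ltwo (ℤ × κ), ∑' x : ℤ × R, ‖(inner ℂ (shf x.1 (ψ x.2)) h : ℂ)‖ ^ 2 ≤ B * ‖h‖ ^ 2) :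
    Fintype.card κ ≤ Fintype.card R := by
  classical
  let C0 : Ltwo (ℤ × κ) →ₗ[ℂ] Ltwo (ℤ × R) :=
    { toFun := fun h => ⟨fun x => inner ℂ (shf x.1 (ψ x.2)) h, Ltwo_mem_iff.2 (hs h)⟩
      map_add' := fun f g => by
        ext i
        exact inner_add_right _ _ _
      map_smul' := fun c f => by
        ext i
        exact inner_smul_right _ _ _ }
  have hC0 : ∀ h x, C0 h x = inner ℂ (shf x.1 (ψ x.2)) h := fun _ _ => rfl
  have hC0n : ∀ h, ‖C0 h‖ ^ 2 = ∑' x : ℤ × R, ‖(inner ℂ (shf x.1 (ψ x.2)) h : ℂ)‖ ^ 2 :=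
    fun h => (Ltwo_hasSum (C0 h)).tsum_eq.symm
  let C : Ltwo (ℤ × κ) →L[ℂ] Ltwo (ℤ × R) := C0.mkContinuous (√ B) (by
    intro h
    have h1 := hup h
    rw [← hC0n] at h1
    rcases le_or_gt 0 B with hB | hB
    · apply le_of_sq_le_sq _ (by positivity)
      rw [mul_pow, Real.sq_sqrt hB]; exact h1
    · have : ‖C0 h‖ ^ 2 ≤ 0 := h1.trans (mul_nonpos_of_nonpos_of_nonneg hB.le (by positivity))
      have : ‖C0 h‖ = 0 := by nlinarith [norm_nonneg (C0 h)]
      rw [this]; positivity)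
  have hC : ∀ h x, C h x = inner ℂ (shf x.1 (ψ x.2)) h := fun _ _ => rfl
  have hCn : ∀ h, A * ‖h‖ ^ 2 ≤ ‖C h‖ ^ 2 := fun h => (hlo h).trans_eq (hC0n h).symm
  let S : Ltwo (ℤ × κ) →L[ℂ] Ltwo (ℤ × κ) := (ContinuousLinearMap.adjoint C).comp C
  have hS : ∀ f g, inner ℂ (S f) g = (inner ℂ (C f) (C g) : ℂ) := fun f g => by
    simp [S, ContinuousLinearMap.adjoint_inner_left]
  have hS' : ∀ f g, inner ℂ f (S g) = (inner ℂ (C f) (C g) : ℂ) := fun f g => by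
    simp [S, ContinuousLinearMap.adjoint_inner_right]
  have hunit : IsUnit S := by
    refine ContinuousLinearMap.isUnit_of_forall_le_norm_inner_map S (c := ⟨A, hA.le⟩) hA ?_
    intro x
    rw [hS, inner_self_eq_norm_sq_to_K]
    have := hCn x
    simp only [norm_pow]
    simp
    change ‖x‖ ^ 2 * A ≤ _
    linarith
  obtain ⟨u, hu⟩ := hunit
  let T : Ltwo (ℤ × κ) →L[ℂ] Ltwo (ℤ × κ) := (u⁻¹ : _)
  have hST : ∀ h, S (T h) = h := fun h => by
    have : S * T = 1 := by rw [← hu]; simp [T]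
    exact congrArg (fun W => W h) this
  have hTS : ∀ h, T (S h) = h := fun h => by
    have : T * S = 1 := by rw [← hu]; simp [T]
    exact congrArg (fun W => W h) this
  have hTsym : ∀ f g, inner ℂ (T f) g = (inner ℂ f (T g) : ℂ) := fun f g => by
    conv_lhs => rw [← hST g, hS', ← hS, hST]
  have hCsh : ∀ a h x, C (shf a h) x = C h (x.1 - a, x.2) := fun a h x => by
    rw [hC, hC]
    have : shf x.1 (ψ x.2) = shf a (shf (x.1 - a) (ψ x.2)) := by rw [shf_add]; congr 1; simp
    rw [this, LinearIsometryEquiv.inner_map_map]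
  have hCshf : ∀ a h, C (shf a h) = shf a (C h) := fun a h => by
    ext x; rw [hCsh]; rfl
  have hSsh : ∀ a h, S (shf a h) = shf a (S h) := fun a h => by
    apply ext_inner_right ℂ
    intro v
    obtain ⟨v, rfl⟩ := (shf a).surjective v
    rw [hS, hCshf, hCshf, LinearIsometryEquiv.inner_map_map, LinearIsometryEquiv.inner_map_map, hS]
  have hTsh : ∀ a h, T (shf a h) = shf a (T h) := fun a h => by
    conv_lhs => rw [← hST h, ← hSsh, hTS]
  let e : ℤ × κ → Ltwo (ℤ × κ) := fun x => lp.single 2 x 1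
  have he : ∀ x h, inner ℂ (e x) h = h x := fun x h => by
    simp [e, lp.inner_single_left]
  have he' : ∀ x h, inner ℂ h (e x) = (starRingEnd ℂ) (h x) := fun x h => by
    rw [← inner_conj_symm, he]
  -- trace identity
  have htr : ∀ k : κ, HasSum (fun x : ℤ × R => T (ψ x.2) (x.1, k) * (starRingEnd ℂ) (ψ x.2 (x.1, k))) 1 := by
    intro k
    have h1 := Ltwo_inner (C (T (e (0, k)))) (C (e (0, k)))
    rw [← hS, hST, he] at h1
    have h2 : e (0, k) (0, k) = 1 := by simp [e]
    rw [h2] at h1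
    let ν : ℤ × R ≃ ℤ × R := (Equiv.neg ℤ).prodCongr (Equiv.refl R)
    rw [← ν.hasSum_iff] at h1
    convert h1 using 1
    ext x
    have hν : ν x = (-x.1, x.2) := rfl
    simp only [Function.comp, hν, hC]
    rw [he', inner_conj_symm, hTsym, hTsh, he, shf_apply, shf_apply]
    simp [mul_comm]
  have hb : ∀ r : R, ‖(inner ℂ (ψ r) (T (ψ r)) : ℂ)‖ ≤ 1 := by
    intro r
    have h1 : (inner ℂ (ψ r) (T (ψ r)) : ℂ) = C (T (ψ r)) (0, r) := by
      rw [hC]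
      have : shf 0 (ψ r) = ψ r := by ext x; simp [shf_apply]
      simp [this]
    have h2 : (inner ℂ (ψ r) (T (ψ r)) : ℂ) = (‖C (T (ψ r))‖ : ℂ) ^ 2 := by
      conv_lhs => rw [← hST (ψ r), hS, hTS, inner_self_eq_norm_sq_to_K]
      simp
    have h3 : ‖C (T (ψ r)) (0, r)‖ ≤ ‖C (T (ψ r))‖ := lp.norm_apply_le_norm (by norm_num) _ _
    rw [← h1, h2] at h3
    rw [h2]
    simp only [norm_pow, Complex.norm_real, norm_norm] at h3 ⊢
    have := norm_nonneg (C (T (ψ r)))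
    by_contra hcon
    push Not at hcon
    nlinarith
  have hsum1 : HasSum (fun x : ℤ × R => ∑ k : κ, T (ψ x.2) (x.1, k) * (starRingEnd ℂ) (ψ x.2 (x.1, k)))
      (∑ k : κ, (1 : ℂ)) := hasSum_sum fun k _ => htr k
  -- other order
  have hsum2 : ∀ r : R, HasSum (fun n : ℤ => ∑ k : κ, T (ψ r) (n, k) * (starRingEnd ℂ) (ψ r (n, k)))
      (inner ℂ (ψ r) (T (ψ r))) := by
    intro r
    have h1 := Ltwo_inner (ψ r) (T (ψ r))
    exact h1.prod_fiberwise fun n => hasSum_fintype _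
  have hsum3 : HasSum (fun r : R => (inner ℂ (ψ r) (T (ψ r)) : ℂ)) (∑ k : κ, (1 : ℂ)) := by
    have h1 := ((Equiv.prodComm R ℤ).hasSum_iff).2 hsum1
    exact h1.prod_fiberwise fun r => hsum2 r
  have hfin := hsum3.unique (hasSum_fintype _)
  have hle : ‖∑ r : R, (inner ℂ (ψ r) (T (ψ r)) : ℂ)‖ ≤ ∑ r : R, (1 : ℝ) :=
    norm_sum_le_of_le _ fun r _ => hb r
  rw [← hfin] at hle
  simp at hle
  exact_mod_cast hle
lemma int_eq_of_dvd {p : ℕ} (a b : Fin p) (h : (p : ℤ) ∣ ((a : ℕ) : ℤ) - ((b : ℕ) : ℤ)) : a = b := by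
  have ha := a.2
  have hb := b.2
  have := Int.eq_zero_of_abs_lt_dvd h (by rw [abs_lt]; omega)
  ext; omega

lemma fin_cancel {p q : ℕ} (hpq : Nat.Coprime p q) (a b : Fin p) (t : ℤ)
    (h : ((a : ℕ) : ℤ) * q - ((b : ℕ) : ℤ) * q = p * t) : a = b := by
  apply int_eq_of_dvd
  have hc : IsCoprime (p : ℤ) (q : ℤ) := Nat.isCoprime_iff_coprime.2 hpq
  apply hc.dvd_of_dvd_mul_right
  exact ⟨t, by rw [← h]; ring⟩

lemma idx_inj {d p q : ℕ} (hd : 0 < d) (hp : 0 < p) (hpq : Nat.Coprime p q) (a b : Fin p) (n n' : ℤ)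
    (h : ((a : ℕ) : ℤ) * ((d * q : ℕ) : ℤ) + n * ((p * d : ℕ) : ℤ)
      = ((b : ℕ) : ℤ) * ((d * q : ℕ) : ℤ) + n' * ((p * d : ℕ) : ℤ)) : a = b ∧ n = n' := by
  have hd' : (d : ℤ) ≠ 0 := by positivity
  have hp' : (p : ℤ) ≠ 0 := by positivity
  have hab : a = b := by
    apply fin_cancel hpq a b (n' - n)
    apply mul_left_cancel₀ hd'
    push_cast at h
    linear_combination h
  subst hab
  refine ⟨rfl, ?_⟩
  apply mul_left_cancel₀ (mul_ne_zero hp' hd')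
  push_cast at h
  linear_combination h

lemma idx_surj {p q : ℕ} (hp : 0 < p) (hpq : Nat.Coprime p q) (t : ℤ) :
    ∃ (a : Fin p) (n : ℤ), t = (a : ℕ) * q + n * p := by
  have hc : IsCoprime (p : ℤ) (q : ℤ) := Nat.isCoprime_iff_coprime.2 hpq
  obtain ⟨u, v, huv⟩ := hc
  have hp' : (p : ℤ) ≠ 0 := by positivity
  have h0 := Int.emod_nonneg (v * t) hp'
  have h1 := Int.emod_lt_of_pos (v * t) (show (0 : ℤ) < p by positivity)
  refine ⟨⟨((v * t) % p).toNat, by omega⟩, u * t + (v * t) / p * q, ?_⟩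
  simp only [Int.toNat_of_nonneg h0]
  have := Int.emod_add_mul_ediv (v * t) p
  linear_combination (-t) * huv - q * this

lemma root_sum (M : ℕ) (hM : 0 < M) (z : ℤ) :
    ∑ m : Fin M, Complex.exp (2 * Real.pi * Complex.I * (m : ℕ) * z / M)
      = if (M : ℤ) ∣ z then (M : ℂ) else 0 := by
  have hM' : (M : ℂ) ≠ 0 := by exact_mod_cast hM.ne'
  have h1 : ∀ m : ℕ, Complex.exp (2 * Real.pi * Complex.I * m * z / M)
      = Complex.exp (2 * Real.pi * Complex.I * z / M) ^ m := fun m => by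
    rw [← Complex.exp_nat_mul]; congr 1; ring
  have hdvd : Complex.exp (2 * Real.pi * Complex.I * z / M) = 1 ↔ (M : ℤ) ∣ z := by
    rw [Complex.exp_eq_one_iff]
    constructor
    · rintro ⟨n, hn⟩
      refine ⟨n, ?_⟩
      have h2 := Complex.two_pi_I_ne_zero
      rw [div_eq_iff hM'] at hn
      have : (z : ℂ) = M * n := by
        apply mul_left_cancel₀ h2
        linear_combination hn
      exact_mod_cast this
    · rintro ⟨n, rfl⟩
      refine ⟨n, ?_⟩
      push_cast
      field_simp
  simp_rw [h1]
  rw [Fin.sum_univ_eq_sum_range (fun m => Complex.exp (2 * Real.pi * Complex.I * z / M) ^ m)]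
  split_ifs with h
  · rw [hdvd.2 h]; simp
  · have h3 := mul_geom_sum (Complex.exp (2 * Real.pi * Complex.I * z / M)) M
    have h4 : Complex.exp (2 * Real.pi * Complex.I * z / M) ^ M = 1 := by
      rw [← Complex.exp_nat_mul, Complex.exp_eq_one_iff]
      refine ⟨z, ?_⟩
      field_simp
    rw [h4, sub_self] at h3
    rcases mul_eq_zero.1 h3 with h5 | h5
    · exact absurd (hdvd.1 (sub_eq_zero.1 h5)) h
    · exact h5

lemma conj_ex (M m : ℕ) (z : ℤ) : (starRingEnd ℂ) (Complex.exp (2 * Real.pi * Complex.I * m * z / M))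
    = Complex.exp (2 * Real.pi * Complex.I * m * (-z : ℤ) / M) := by
  rw [← Complex.exp_conj]; congr 1; simp [show (starRingEnd ℂ) 2 = 2 from map_ofNat _ 2]

lemma fin_parseval {X : Type} (M : ℕ) (hM : 0 < M) (s : Finset X) (y : X → ℤ) (c : X → ℂ)
    (hy : ∀ a ∈ s, ∀ b ∈ s, (M : ℤ) ∣ y a - y b → a = b) :
    ∑ m : Fin M, ‖∑ x ∈ s, c x * (starRingEnd ℂ) (Complex.exp (2 * Real.pi * Complex.I * (m : ℕ) * (y x : ℤ) / M))‖ ^ 2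
      = M * ∑ x ∈ s, ‖c x‖ ^ 2 := by
  classical
  have key : ((∑ m : Fin M, ‖∑ x ∈ s, c x * (starRingEnd ℂ) (Complex.exp (2 * Real.pi * Complex.I * (m : ℕ) * (y x : ℤ) / M))‖ ^ 2 : ℝ) : ℂ)
      = ((M * ∑ x ∈ s, ‖c x‖ ^ 2 : ℝ) : ℂ) := by
    push_cast
    simp_rw [← Complex.mul_conj', map_sum, map_mul, Complex.conj_conj, Finset.sum_mul_sum]
    rw [Finset.sum_comm, Finset.mul_sum]
    refine Finset.sum_congr rfl fun a ha => ?_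
    rw [Finset.sum_comm]
    have h1 : ∀ b ∈ s, ∑ m : Fin M, c a * (starRingEnd ℂ) (Complex.exp (2 * Real.pi * Complex.I * (m : ℕ) * (y a : ℤ) / M))
        * ((starRingEnd ℂ) (c b) * Complex.exp (2 * Real.pi * Complex.I * (m : ℕ) * (y b : ℤ) / M))
        = if a = b then M * (c a * (starRingEnd ℂ) (c a)) else 0 := by
      intro b hb
      have h2 : ∀ m : Fin M, c a * (starRingEnd ℂ) (Complex.exp (2 * Real.pi * Complex.I * (m : ℕ) * (y a : ℤ) / M))
        * ((starRingEnd ℂ) (c b) * Complex.exp (2 * Real.pi * Complex.I * (m : ℕ) * (y b : ℤ) / M))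
        = c a * (starRingEnd ℂ) (c b) * Complex.exp (2 * Real.pi * Complex.I * (m : ℕ) * (y b - y a : ℤ) / M) := by
        intro m
        have : Complex.exp (2 * Real.pi * Complex.I * (m : ℕ) * (y b - y a : ℤ) / M)
          = Complex.exp (2 * Real.pi * Complex.I * (m : ℕ) * (-y a : ℤ) / M) * Complex.exp (2 * Real.pi * Complex.I * (m : ℕ) * (y b : ℤ) / M) := by
          rw [← Complex.exp_add]; congr 1; push_cast; ring
        rw [conj_ex, this]; ring
      simp_rw [h2]
      rw [← Finset.mul_sum, root_sum M hM]
      by_cases hab : a = b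
      · subst hab; simp [mul_comm]
      · rw [if_neg hab, if_neg, mul_zero]
        intro hd
        exact hab (hy b hb a ha hd).symm
    rw [Finset.sum_congr rfl h1]
    simp [ha]
  exact_mod_cast key

theorem sufficiency (d p q L : ℕ) (hd : 0 < d) (hp : 0 < p) (hq : 0 < q)
    (hpq : Nat.Coprime p q)
    (S : Set ℤ) (hper : ∀ j ∈ S, ∀ n : ℤ, j + n * (p * d : ℕ) ∈ S)
    (hK : ∀ j : ℤ, 0 ≤ j → j < (d : ℤ) →
        Nat.card {k : Fin p // j + (k : ℕ) * ((d * q : ℕ) : ℤ) ∈ S} ≤ q * L) :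
    ∃ g : Fin L → lp (fun _ : ℤ => ℂ) 2, (∀ l, ∀ j, j ∉ S → g l j = 0) ∧
        ∀ f : lp (fun _ : ℤ => ℂ) 2, (∀ j, j ∉ S → f j = 0) →
          gaborSum (d * q) (p * d) L (fun l i => g l i) (fun i => f i) = ‖f‖ ^ 2 := by
  classical
  have hMpos : 0 < d * q := by positivity
  have hφ : ∀ j : Fin d, ∃ φ : {k : Fin p // ((j : ℕ) : ℤ) + (k : ℕ) * ((d * q : ℕ) : ℤ) ∈ S} → Fin q × Fin L,
      Function.Injective φ := by
    intro j
    have h1 := hK (j : ℕ) (by positivity) (by exact_mod_cast j.2)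
    have : Nonempty ({k : Fin p // ((j : ℕ) : ℤ) + (k : ℕ) * ((d * q : ℕ) : ℤ) ∈ S} ↪ Fin q × Fin L) := by
      apply Function.Embedding.nonempty_of_card_le
      rw [Nat.card_eq_fintype_card] at h1
      simpa using h1
    obtain ⟨e⟩ := this
    exact ⟨e, e.injective⟩
  choose φ hφ using hφ
  let X := Σ j : Fin d, {k : Fin p // ((j : ℕ) : ℤ) + (k : ℕ) * ((d * q : ℕ) : ℤ) ∈ S}
  let pos : X → ℤ := fun x => ((x.1 : ℕ) : ℤ) + (x.2.1 : ℕ) * ((d * q : ℕ) : ℤ) + ((φ x.1 x.2).1 : ℕ) * ((p * d : ℕ) : ℤ)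
  let lab : X → Fin L := fun x => (φ x.1 x.2).2
  have hposdef : ∀ x, pos x = ((x.1 : ℕ) : ℤ) + (x.2.1 : ℕ) * ((d * q : ℕ) : ℤ) + ((φ x.1 x.2).1 : ℕ) * ((p * d : ℕ) : ℤ) := fun _ => rfl
  have hposS : ∀ x, pos x ∈ S := fun x => hper _ x.2.2 _
  have hF1 : Function.Injective (fun z : ℤ × X => pos z.2 + z.1 * ((p * d : ℕ) : ℤ)) := by
    rintro ⟨n, j, k⟩ ⟨n', j', k'⟩ h
    simp only [hposdef] at h
    have hj : j = j' := by
      apply int_eq_of_dvd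
      refine ⟨(k'.1 : ℕ) * q + ((φ j' k').1 : ℕ) * p + n' * p - ((k.1 : ℕ) * q + ((φ j k).1 : ℕ) * p + n * p), ?_⟩
      push_cast at h
      linear_combination h
    subst hj
    obtain ⟨h1, h2⟩ := idx_inj hd hp hpq k.1 k'.1 (((φ j k).1 : ℕ) + n) (((φ j k').1 : ℕ) + n') (by linear_combination h)
    have h3 : k = k' := Subtype.ext h1
    subst h3
    simp at h2
    simp [h2]
  have hF1r : ∀ i ∈ S, i ∈ Set.range (fun z : ℤ × X => pos z.2 + z.1 * ((p * d : ℕ) : ℤ)) := by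
    intro i hi
    have hd' : (d : ℤ) ≠ 0 := by positivity
    have h0 := Int.emod_nonneg i hd'
    have h1 := Int.emod_lt_of_pos i (show (0 : ℤ) < d by positivity)
    have h2 := Int.emod_add_mul_ediv i d
    obtain ⟨a, n, han⟩ := idx_surj hp hpq (i / d)
    let j : Fin d := ⟨(i % d).toNat, by omega⟩
    have hj : ((j : ℕ) : ℤ) = i % d := Int.toNat_of_nonneg h0
    have hia : i = ((j : ℕ) : ℤ) + (a : ℕ) * ((d * q : ℕ) : ℤ) + n * ((p * d : ℕ) : ℤ) := by
      rw [hj]; push_cast; linear_combination -h2 + d * han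
    have ha : ((j : ℕ) : ℤ) + (a : ℕ) * ((d * q : ℕ) : ℤ) ∈ S := by
      have := hper i hi (-n)
      convert this using 1
      linear_combination -hia
    refine ⟨(n - ((φ j ⟨a, ha⟩).1 : ℕ), ⟨j, ⟨a, ha⟩⟩), ?_⟩
    simp only [hposdef]
    linear_combination -hia
  have hF2 : ∀ x y : X, lab x = lab y → ((d * q : ℕ) : ℤ) ∣ pos x - pos y → x = y := by
    rintro ⟨j, k⟩ ⟨j', k'⟩ hl ⟨t, ht⟩
    simp only [hposdef] at ht
    have hj : j = j' := by
      apply int_eq_of_dvd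
      refine ⟨(k'.1 : ℕ) * q + ((φ j' k').1 : ℕ) * p - ((k.1 : ℕ) * q + ((φ j k).1 : ℕ) * p) + q * t, ?_⟩
      push_cast at ht
      linear_combination ht
    subst hj
    have hd' : (d : ℤ) ≠ 0 := by positivity
    have hs : (φ j k).1 = (φ j k').1 := by
      apply fin_cancel hpq.symm _ _ (t - (k.1 : ℕ) + (k'.1 : ℕ))
      apply mul_left_cancel₀ hd'
      push_cast at ht
      linear_combination ht
    have : k = k' := hφ j (Prod.ext hs hl)
    subst this
    rfl
  let c : ℝ := (√ ((d * q : ℕ) : ℝ))⁻¹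
  have hc2 : c ^ 2 * ((d * q : ℕ) : ℝ) = 1 := by
    simp only [c, inv_pow]
    rw [Real.sq_sqrt (by positivity)]
    have : ((d * q : ℕ) : ℝ) ≠ 0 := by positivity
    field_simp
  let g : Fin L → lp (fun _ : ℤ => ℂ) 2 := fun l =>
    ∑ x ∈ Finset.univ.filter (fun x => lab x = l), lp.single 2 (pos x) (c : ℂ)
  have hg : ∀ l i, g l i = ∑ x ∈ Finset.univ.filter (fun x => lab x = l), if i = pos x then (c : ℂ) else 0 := by
    intro l i
    simp only [g, lp.coeFn_sum, Finset.sum_apply, lp.single_apply, Pi.single_apply]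
  refine ⟨g, ?_, ?_⟩
  · intro l j hj
    rw [hg]
    refine Finset.sum_eq_zero fun x _ => if_neg ?_
    rintro rfl
    exact hj (hposS x)
  intro f hf
  have hip : ∀ (m : ℕ) (n : ℤ) (l : Fin L), ip (fun i => f i) (gaborFn (d * q) (p * d) (fun i => g l i) m n)
      = ∑ x ∈ Finset.univ.filter (fun x => lab x = l), (f (pos x + n * ((p * d : ℕ) : ℤ)) * c) *
        (starRingEnd ℂ) (Complex.exp (2 * Real.pi * Complex.I * m * (pos x + n * ((p * d : ℕ) : ℤ) : ℤ) / (d * q : ℕ))) := by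
    intro m n l
    unfold ip gaborFn
    simp_rw [hg, map_mul, map_sum, Finset.mul_sum]
    have hsup : ∀ x : X, ∀ i : ℤ, i ≠ pos x + n * ((p * d : ℕ) : ℤ) →
        f i * ((starRingEnd ℂ) (Complex.exp (2 * Real.pi * Complex.I * m * i / (d * q : ℕ))) *
          (starRingEnd ℂ) (if i - n * ((p * d : ℕ) : ℤ) = pos x then (c : ℂ) else 0)) = 0 := by
      intro x i hi
      rw [if_neg (by intro h; apply hi; linear_combination h)]
      simp
    rw [Summable.tsum_finsetSum]
    · refine Finset.sum_congr rfl fun x _ => ?_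
      rw [tsum_eq_single _ (hsup x)]
      rw [if_pos (by ring), Complex.conj_ofReal]
      ring
    · intro x _
      exact (hasSum_single _ (hsup x)).summable
  have hsumS : HasSum (fun z : ℤ × X => ‖f (pos z.2 + z.1 * ((p * d : ℕ) : ℤ))‖ ^ 2) (‖f‖ ^ 2) := by
    have h1 := Ltwo_hasSum f
    rw [← hF1.hasSum_iff] at h1
    · exact h1
    · intro i hi
      rw [hf i fun h => hi (hF1r i h)]
      simp
  have hsumN : HasSum (fun n : ℤ => ∑ x : X, ‖f (pos x + n * ((p * d : ℕ) : ℤ))‖ ^ 2) (‖f‖ ^ 2) :=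
    hsumS.prod_fiberwise fun n => hasSum_fintype _
  let F : ℤ × (Fin (d * q) × Fin L) → ℝ := fun z =>
    ‖ip (fun i => f i) (gaborFn (d * q) (p * d) (fun i => g z.2.2 i) (z.2.1 : ℕ) z.1)‖ ^ 2
  have hFn : ∀ n : ℤ, ∑ y : Fin (d * q) × Fin L, F (n, y) = ∑ x : X, ‖f (pos x + n * ((p * d : ℕ) : ℤ))‖ ^ 2 := by
    intro n
    rw [Fintype.sum_prod_type, Finset.sum_comm]
    rw [← Finset.sum_fiberwise Finset.univ lab]
    refine Finset.sum_congr rfl fun l _ => ?_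
    simp only [F, hip]
    rw [fin_parseval (d * q) hMpos _ (fun x => pos x + n * ((p * d : ℕ) : ℤ)) (fun x => f (pos x + n * ((p * d : ℕ) : ℤ)) * c)]
    · rw [Finset.mul_sum]
      refine Finset.sum_congr rfl fun x _ => ?_
      rw [norm_mul, mul_pow, Complex.norm_real, Real.norm_eq_abs, sq_abs]
      linear_combination (‖f (pos x + n * ((p * d : ℕ) : ℤ))‖ ^ 2) * hc2
    · intro a ha b hb hab
      simp only [Finset.mem_filter, Finset.mem_univ, true_and] at ha hb
      apply hF2 a b (ha.trans hb.symm)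
      convert hab using 1
      ring
  have hFs : Summable F := by
    rw [summable_prod_of_nonneg (fun _ => by positivity)]
    refine ⟨fun n => (hasSum_fintype _).summable, ?_⟩
    simp_rw [tsum_fintype, hFn]
    exact hsumN.summable
  let E : (Fin (d * q) × ℤ × Fin L) ≃ (ℤ × (Fin (d * q) × Fin L)) :=
    { toFun := fun x => (x.2.1, (x.1, x.2.2))
      invFun := fun x => (x.2.1, (x.1, x.2.2))
      left_inv := fun _ => rfl
      right_inv := fun _ => rfl }
  have hG : gaborSum (d * q) (p * d) L (fun l i => g l i) (fun i => f i) = ∑' z, F z := E.tsum_eq F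
  rw [hG, hFs.tsum_prod]
  simp_rw [tsum_fintype, hFn]
  exact hsumN.tsum_eq

theorem necessity (d p q L : ℕ) (hd : 0 < d) (hp : 0 < p) (hq : 0 < q)
    (hpq : Nat.Coprime p q)
    (S : Set ℤ) (hper : ∀ j ∈ S, ∀ n : ℤ, j + n * (p * d : ℕ) ∈ S)
    (g : Fin L → lp (fun _ : ℤ => ℂ) 2) (A B : ℝ) (hA : 0 < A)
    (hfr : ∀ f : lp (fun _ : ℤ => ℂ) 2, (∀ j, j ∉ S → f j = 0) →
            A * ‖f‖ ^ 2 ≤ gaborSum (d * q) (p * d) L (fun l i => g l i) (fun i => f i) ∧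
            gaborSum (d * q) (p * d) L (fun l i => g l i) (fun i => f i) ≤ B * ‖f‖ ^ 2)
    (j : ℤ) : Nat.card {k : Fin p // j + (k : ℕ) * ((d * q : ℕ) : ℤ) ∈ S} ≤ q * L := by
  classical
  have hdC : (d : ℂ) ≠ 0 := by exact_mod_cast hd.ne'
  have hqC : (q : ℂ) ≠ 0 := by exact_mod_cast hq.ne'
  have hdR : (0 : ℝ) < d := by exact_mod_cast hd
  let κ := {k : Fin p // j + (k : ℕ) * ((d * q : ℕ) : ℤ) ∈ S}
  let ι : ℤ × κ → ℤ := fun x => j + (x.2.1 : ℕ) * ((d * q : ℕ) : ℤ) + x.1 * ((p * d : ℕ) : ℤ)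
  have hιdef : ∀ x, ι x = j + (x.2.1 : ℕ) * ((d * q : ℕ) : ℤ) + x.1 * ((p * d : ℕ) : ℤ) := fun _ => rfl
  have hιS : ∀ x, ι x ∈ S := fun x => hper _ x.2.2 _
  have hι : Function.Injective ι := by
    rintro ⟨n, k⟩ ⟨n', k'⟩ h
    simp only [hιdef] at h
    obtain ⟨h1, h2⟩ := idx_inj hd hp hpq k.1 k'.1 n n' (by linear_combination h)
    exact Prod.ext h2 (Subtype.ext h1)
  let ψ : Fin q × Fin L → Ltwo (ℤ × κ) := fun r =>
    ⟨fun x => Complex.exp (2 * Real.pi * Complex.I * (r.1 : ℕ) * ((x.1 * p : ℤ) : ℂ) / q) * g r.2 (ι x), by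
      refine Ltwo_mem_iff.2 ?_
      have h1 := (Ltwo_hasSum (g r.2)).summable.comp_injective hι
      refine h1.congr fun x => ?_
      have : (2 * Real.pi * Complex.I * (r.1 : ℕ) * ((x.1 * p : ℤ) : ℂ) / q)
        = ((2 * Real.pi * (r.1 : ℕ) * ((x.1 * p : ℤ) : ℝ) / q : ℝ) : ℂ) * Complex.I := by
        push_cast; ring
      rw [norm_mul, this, Complex.norm_exp_ofReal_mul_I, one_mul]
      rfl⟩
  have hψ : ∀ r x, ψ r x = Complex.exp (2 * Real.pi * Complex.I * (r.1 : ℕ) * ((x.1 * p : ℤ) : ℂ) / q) * g r.2 (ι x) :=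
    fun _ _ => rfl
  -- extension by zero
  let ex : Ltwo (ℤ × κ) → (ℤ → ℂ) := fun h => Function.extend ι (fun x => h x) 0
  have hexι : ∀ h x, ex h (ι x) = h x := fun h x => hι.extend_apply _ _ _
  have hex0 : ∀ h i, i ∉ Set.range ι → ex h i = 0 := fun h i hi => by
    simp only [ex]
    rw [Function.extend_apply' _ _ _ (fun ⟨a, ha⟩ => hi ⟨a, ha⟩)]; rfl
  have hexs : ∀ h : Ltwo (ℤ × κ), HasSum (fun i => ‖ex h i‖ ^ 2) (‖h‖ ^ 2) := fun h => by
    rw [← hι.hasSum_iff]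
    · have := Ltwo_hasSum h
      convert this using 1
      ext x
      simp only [Function.comp, hexι]
    · intro i hi
      rw [hex0 h i hi]; simp
  let f : Ltwo (ℤ × κ) → Ltwo ℤ := fun h => ⟨ex h, Ltwo_mem_iff.2 (hexs h).summable⟩
  have hfn : ∀ h, ‖f h‖ ^ 2 = ‖h‖ ^ 2 := fun h => (Ltwo_hasSum (f h)).unique (hexs h)
  have hfS : ∀ h i, i ∉ S → f h i = 0 := fun h i hi => hex0 h i (by
    rintro ⟨x, rfl⟩; exact hi (hιS x))
  have hip : ∀ (h : Ltwo (ℤ × κ)) (a : Fin d) (b : Fin q) (n : ℤ) (l : Fin L),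
      ‖ip (fun i => f h i) (gaborFn (d * q) (p * d) (fun i => g l i) ((b : ℕ) + q * (a : ℕ)) n)‖
        = ‖(inner ℂ (shf n (ψ (b, l))) h : ℂ)‖ := by
    intro h a b n l
    have h1 := (Ltwo_inner (shf n (ψ (b, l))) h).tsum_eq
    have h2 : ip (fun i => f h i) (gaborFn (d * q) (p * d) (fun i => g l i) ((b : ℕ) + q * (a : ℕ)) n)
        = ∑' x : ℤ × κ, h x * (starRingEnd ℂ) (gaborFn (d * q) (p * d) (fun i => g l i) ((b : ℕ) + q * (a : ℕ)) n (ι x)) := by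
      unfold ip
      rw [← hι.tsum_eq]
      · refine tsum_congr fun x => ?_
        change ex h (ι x) * _ = _
        rw [hexι]
      · intro i hi
        by_contra hcon
        apply hi
        change ex h i * _ = 0
        rw [hex0 h i hcon, zero_mul]
    let θ : ℝ := 2 * Real.pi * ((b : ℕ) + q * (a : ℕ)) * j / (d * q) + 2 * Real.pi * (b : ℕ) * n * p / q
    have h3 : ∀ x : ℤ × κ, gaborFn (d * q) (p * d) (fun i => g l i) ((b : ℕ) + q * (a : ℕ)) n (ι x)
        = Complex.exp (θ * Complex.I) * shf n (ψ (b, l)) x := by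
      intro x
      rw [shf_apply, hψ]
      unfold gaborFn
      have hι2 : ι x - n * ((p * d : ℕ) : ℤ) = ι (x.1 - n, x.2) := by
        simp only [hιdef]; ring
      rw [hι2, ← mul_assoc, ← Complex.exp_add]
      congr 1
      rw [Complex.exp_eq_exp_iff_exists_int]
      refine ⟨((b : ℕ) + q * (a : ℕ)) * (x.2.1 : ℕ) + (a : ℕ) * x.1 * p, ?_⟩
      simp only [hιdef, θ]
      push_cast
      field_simp
      ring
    rw [h2, ← h1]
    simp_rw [h3, map_mul]
    have h4 : ∀ x : ℤ × κ, h x * ((starRingEnd ℂ) (Complex.exp (θ * Complex.I)) * (starRingEnd ℂ) (shf n (ψ (b, l)) x))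
        = (starRingEnd ℂ) (Complex.exp (θ * Complex.I)) * (h x * (starRingEnd ℂ) (shf n (ψ (b, l)) x)) := fun x => by ring
    simp_rw [h4]
    rw [tsum_mul_left, norm_mul, RCLike.norm_conj, Complex.norm_exp_ofReal_mul_I, one_mul]
  let E : (Fin d × (ℤ × (Fin q × Fin L))) ≃ (Fin (d * q) × ℤ × Fin L) :=
    { toFun := fun x => (finProdFinEquiv (x.1, x.2.2.1), (x.2.1, x.2.2.2))
      invFun := fun y => ((finProdFinEquiv.symm y.1).1, (y.2.1, ((finProdFinEquiv.symm y.1).2, y.2.2)))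
      left_inv := fun x => by simp
      right_inv := fun y => Prod.ext (finProdFinEquiv.apply_symm_apply y.1) rfl }
  let F : Ltwo (ℤ × κ) → (Fin (d * q) × ℤ × Fin L) → ℝ := fun h x =>
    ‖ip (fun i => f h i) (gaborFn (d * q) (p * d) (fun i => g x.2.2 i) (x.1 : ℕ) x.2.1)‖ ^ 2
  have hF : ∀ h x, F h (E x) = ‖(inner ℂ (shf x.2.1 (ψ x.2.2)) h : ℂ)‖ ^ 2 := by
    rintro h ⟨a, n, b, l⟩
    simp only [F, E, Equiv.coe_fn_mk, finProdFinEquiv_apply_val]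
    rw [hip]
  have hFsum : ∀ h, Summable (F h) := by
    intro h
    by_cases h0 : h = 0
    · subst h0
      rw [← E.summable_iff]
      have : F 0 ∘ E = fun _ => 0 := by
        ext x; simp only [Function.comp, hF]; simp
      rw [this]; exact summable_zero
    · by_contra hcon
      have h1 := (hfr (f h) (hfS h)).1
      have h2 : gaborSum (d * q) (p * d) L (fun l i => g l i) (fun i => f h i) = 0 :=
        tsum_eq_zero_of_not_summable hcon
      rw [h2, hfn] at h1
      have : 0 < ‖h‖ := norm_pos_iff.2 h0
      have : 0 < A * ‖h‖ ^ 2 := by positivity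
      linarith
  have hFE : ∀ h, Summable fun x : Fin d × (ℤ × (Fin q × Fin L)) => ‖(inner ℂ (shf x.2.1 (ψ x.2.2)) h : ℂ)‖ ^ 2 := by
    intro h
    have := (E.summable_iff).2 (hFsum h)
    exact this.congr fun x => hF h x
  have hG : ∀ h, gaborSum (d * q) (p * d) L (fun l i => g l i) (fun i => f h i)
      = d * ∑' x : ℤ × (Fin q × Fin L), ‖(inner ℂ (shf x.1 (ψ x.2)) h : ℂ)‖ ^ 2 := by
    intro h
    have h1 : gaborSum (d * q) (p * d) L (fun l i => g l i) (fun i => f h i) = ∑' x, F h (E x) :=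
      (E.tsum_eq (F h)).symm
    rw [h1]
    simp_rw [hF]
    rw [(hFE h).tsum_prod, tsum_fintype]
    simp
  have := frame_dim ψ (A / d) (B / d) (by positivity) (fun h => (hFE h).prod_factor ⟨0, hd⟩) (fun h => by
      have h1 := (hfr (f h) (hfS h)).1
      rw [hG, hfn] at h1
      rw [div_mul_eq_mul_div, div_le_iff₀ hdR]
      linarith) (fun h => by
      have h1 := (hfr (f h) (hfS h)).2
      rw [hG, hfn] at h1
      rw [div_mul_eq_mul_div, le_div_iff₀ hdR]
      linarith)
  rw [Fintype.card_prod, Fintype.card_fin, Fintype.card_fin, ← Nat.card_eq_fintype_card] at this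
  exact this

/-- Equivalence: existence of a multi-window Gabor frame for `ℓ²(𝕊)`,
existence of a multi-window Gabor Parseval frame for `ℓ²(𝕊)`, and the
condition `card 𝒦_j ≤ qL` for all `j ∈ {0,...,M/q-1}`. -/
theorem stmt18 (M N p q L : ℕ) (hM : 0 < M) (hN : 0 < N) (hp : 0 < p) (hq : 0 < q)
    (hL : 0 < L) (hpq : Nat.Coprime p q) (hMN : q * N = p * M)
    (S : Set ℤ) (hper : ∀ j ∈ S, ∀ n : ℤ, j + n * N ∈ S) :
    ((∃ g : Fin L → lp (fun _ : ℤ => ℂ) 2, (∀ l, ∀ j, j ∉ S → g l j = 0) ∧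
        ∃ A B : ℝ, 0 < A ∧ A ≤ B ∧
          ∀ f : lp (fun _ : ℤ => ℂ) 2, (∀ j, j ∉ S → f j = 0) →
            A * ‖f‖ ^ 2 ≤ gaborSum M N L (fun l i => g l i) (fun i => f i) ∧
            gaborSum M N L (fun l i => g l i) (fun i => f i) ≤ B * ‖f‖ ^ 2) ↔
      (∀ j : ℤ, 0 ≤ j → j < ((M / q : ℕ) : ℤ) →
        Nat.card {k : Fin p // j + (k : ℕ) * (M : ℤ) ∈ S} ≤ q * L)) ∧
    ((∃ g : Fin L → lp (fun _ : ℤ => ℂ) 2, (∀ l, ∀ j, j ∉ S → g l j = 0) ∧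
        ∀ f : lp (fun _ : ℤ => ℂ) 2, (∀ j, j ∉ S → f j = 0) →
          gaborSum M N L (fun l i => g l i) (fun i => f i) = ‖f‖ ^ 2) ↔
      (∀ j : ℤ, 0 ≤ j → j < ((M / q : ℕ) : ℤ) →
        Nat.card {k : Fin p // j + (k : ℕ) * (M : ℤ) ∈ S} ≤ q * L)) := by
  have hqM : q ∣ M := (Nat.Coprime.dvd_of_dvd_mul_left hpq.symm) ⟨N, hMN.symm⟩
  obtain ⟨d, hd⟩ := hqM
  rw [mul_comm] at hd
  subst hd
  have hdpos : 0 < d := Nat.pos_of_mul_pos_right hM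
  have hNd : N = p * d := by
    apply Nat.eq_of_mul_eq_mul_left hq
    rw [hMN]; ring
  subst hNd
  rw [Nat.mul_div_cancel _ hq]
  have hsuff := sufficiency d p q L hdpos hp hq hpq S hper
  have hnec := necessity d p q L hdpos hp hq hpq S hper
  refine ⟨⟨?_, ?_⟩, ⟨?_, hsuff⟩⟩
  · rintro ⟨g, _, A, B, hA, _, hfr⟩ j _ _
    exact hnec g A B hA hfr j
  · intro hK
    obtain ⟨g, hg, hP⟩ := hsuff hK
    exact ⟨g, hg, 1, 1, one_pos, le_rfl, fun f hf => by rw [hP f hf]; simp⟩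
  · rintro ⟨g, _, hP⟩ j _ _
    exact hnec g 1 1 one_pos (fun f hf => by rw [hP f hf]; simp) j
end
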